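/- arXiv:1305.7212 — 6 statements merged into one kernel-verified Lean document; each statement's English description precedes it below -/
import Mathlib

section
/- A permutation π of the positive integers belongs to the Lévy group 𝒢 if and only if for every subset A of the positive integers, lim_{n→∞} (A(n) − (πA)(n))/n = 0, where πA denotes the image of A under π. -/
open Filter Topology

/-- The counting function `A(n) = |A ∩ [1, n]|`, as a real number. -/
noncomputable def count (A : Set ℕ) (n : ℕ) : ℝ :=
  ((A ∩ Set.Icc 1 n).ncard : ℝ)

/-- `A ⊆ ℕ` has asymptotic density `a`, i.e. `A(n)/n → a`. -/
def HasDensity (A : Set ℕ) (a : ℝ) : Prop :=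
  Filter.Tendsto (fun n : ℕ => count A n / n) Filter.atTop (nhds a)

/-- Membership of a permutation `π` of `ℕ` in the Lévy group `𝒢`:
`|{k : k ≤ n < π(k)}| / n → 0`. -/
def InLevyGroup (π : Equiv.Perm ℕ) : Prop :=
  Filter.Tendsto
    (fun n : ℕ => (({k : ℕ | k ≤ n ∧ n < π k}.ncard : ℝ) / n))
    Filter.atTop (nhds 0)

/-- A finitely additive probability measure defined on all subsets of `ℕ`,
with values in `[0, 1]`. -/
def IsFAMeasure (μ : Set ℕ → ℝ) : Prop :=
  (∀ A : Set ℕ, 0 ≤ μ A) ∧ (∀ A : Set ℕ, μ A ≤ 1) ∧ μ Set.univ = 1 ∧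
    ∀ A B : Set ℕ, Disjoint A B → μ (A ∪ B) = μ A + μ B

/-- A density measure: a finitely additive measure extending asymptotic density. -/
def IsDensityMeasure (μ : Set ℕ → ℝ) : Prop :=
  IsFAMeasure μ ∧ ∀ (A : Set ℕ) (a : ℝ), HasDensity A a → μ A = a

/-- Statistical convergence of a real sequence `x` to `L`: for every `ε > 0`
the set `{n : |x n − L| ≥ ε}` has asymptotic density zero. -/
def StatTendsto (x : ℕ → ℝ) (L : ℝ) : Prop :=
  ∀ ε : ℝ, 0 < ε → HasDensity {n : ℕ | ε ≤ |x n - L|} 0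

/-- The limit of a (bounded) real sequence along an ultrafilter on `ℕ`. -/
noncomputable def ulim (𝒰 : Ultrafilter ℕ) (x : ℕ → ℝ) : ℝ :=
  limUnder (𝒰 : Filter ℕ) x

/-! For an injective `f` and a finite window `S`, the elements of `A` in `S` and those of `f '' A`
in `S` differ in number by the elements of `A` that leave `S` minus those that enter it. As `f` is
injective, it brings at most as many points into `S` as it takes out. So for `S = [1, n]` the
difference is bounded by the number of points crossing `n` upwards, and for
`A = {k | 0 < k ∧ k < f k}`, none of whose elements enter, it counts all of these crossings. Since
the window omits `0`, both comparisons hold only up to an error of `1`. -/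

lemma ncard_preimage_le {α β : Type*} {f : α → β} {S : Set β} (hf : f.Injective) (hS : S.Finite) :
    (f ⁻¹' S).ncard ≤ S.ncard :=
  Set.ncard_le_ncard_of_injOn f (fun _ hk => hk) hf.injOn hS

section Window

variable {α : Type*} {f : α → α} {S : Set α}

lemma ncard_inter_sub_ncard_image_inter (R : Type*) [AddCommGroupWithOne R]
    (hf : f.Injective) (hS : S.Finite) (A : Set α) :
    ((A ∩ S).ncard : R) - (f '' A ∩ S).ncard =
      (A ∩ (S \ f ⁻¹' S)).ncard - (A ∩ (f ⁻¹' S \ S)).ncard := by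
  have hpre : (f ⁻¹' S).Finite := hS.preimage hf.injOn
  have himage : (f '' A ∩ S).ncard = (A ∩ f ⁻¹' S).ncard := by
    rw [← Set.image_inter_preimage, Set.ncard_image_of_injective _ hf]
  have hunion : (A ∩ S).ncard + (A ∩ (f ⁻¹' S \ S)).ncard =
      (A ∩ (S \ f ⁻¹' S)).ncard + (A ∩ f ⁻¹' S).ncard := by
    rw [Set.inter_sdiff_distrib_left, Set.inter_sdiff_distrib_left, add_comm,
      Set.ncard_sdiff_add_ncard _ _ (hpre.inter_of_right A) (hS.inter_of_right A),
      Set.ncard_sdiff_add_ncard _ _ (hS.inter_of_right A) (hpre.inter_of_right A),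
      Set.union_comm]
  rw [himage, sub_eq_sub_iff_add_eq_add]
  exact_mod_cast congrArg (Nat.cast (R := R)) hunion

lemma ncard_preimage_sdiff_le (hf : f.Injective) (hS : S.Finite) :
    (f ⁻¹' S \ S).ncard ≤ (S \ f ⁻¹' S).ncard :=
  (Set.ncard_le_ncard_iff_ncard_sdiff_le_ncard_sdiff (hS.preimage hf.injOn) hS).mp
    (ncard_preimage_le hf hS)

lemma abs_ncard_inter_sub_ncard_image_inter_le (R : Type*) [Ring R] [LinearOrder R]
    [IsStrictOrderedRing R] (hf : f.Injective) (hS : S.Finite) (A : Set α) :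
    |((A ∩ S).ncard : R) - (f '' A ∩ S).ncard| ≤ (S \ f ⁻¹' S).ncard := by
  have hleave : (A ∩ (S \ f ⁻¹' S)).ncard ≤ (S \ f ⁻¹' S).ncard :=
    Set.ncard_inter_le_ncard_right _ _ hS.sdiff
  have henter : (A ∩ (f ⁻¹' S \ S)).ncard ≤ (S \ f ⁻¹' S).ncard :=
    (Set.ncard_inter_le_ncard_right _ _ (hS.preimage hf.injOn).sdiff).trans
      (ncard_preimage_sdiff_le hf hS)
  rw [ncard_inter_sub_ncard_image_inter R hf hS]
  exact abs_sub_le_of_nonneg_of_le (Nat.cast_nonneg _) (mod_cast hleave)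
    (Nat.cast_nonneg _) (mod_cast henter)

end Window

/-- The points that `f` carries upwards across `n`, as counted in `InLevyGroup`; like there, `0` is
allowed. -/
def upCrossings (f : ℕ → ℕ) (n : ℕ) : Set ℕ :=
  {k | k ≤ n ∧ n < f k}

lemma finite_upCrossings (f : ℕ → ℕ) (n : ℕ) : (upCrossings f n).Finite :=
  (Set.finite_Iic n).subset fun _ hk => hk.1

section Crossing

variable {f : ℕ → ℕ}

lemma abs_count_sub_count_image_le_ncard_upCrossings_add_one (hf : f.Injective) (A : Set ℕ)
    (n : ℕ) :
    |count A n - count (f '' A) n| ≤ (upCrossings f n).ncard + 1 := by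
  have hsub : Set.Icc 1 n \ f ⁻¹' Set.Icc 1 n ⊆ upCrossings f n ∪ f ⁻¹' {0} := by
    intro k
    simp only [upCrossings, Set.mem_sdiff, Set.mem_Icc, Set.mem_preimage, Set.mem_union,
      Set.mem_ofPred_eq, Set.mem_singleton_iff]
    omega
  have hfin : (upCrossings f n ∪ f ⁻¹' {0}).Finite :=
    (finite_upCrossings f n).union ((Set.finite_singleton 0).preimage hf.injOn)
  have hzero : (f ⁻¹' {0}).ncard ≤ 1 :=
    (ncard_preimage_le hf (Set.finite_singleton 0)).trans_eq (Set.ncard_singleton 0)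
  have hleave : (Set.Icc 1 n \ f ⁻¹' Set.Icc 1 n).ncard ≤ (upCrossings f n).ncard + 1 :=
    calc (Set.Icc 1 n \ f ⁻¹' Set.Icc 1 n).ncard
      _ ≤ (upCrossings f n ∪ f ⁻¹' {0}).ncard := Set.ncard_le_ncard hsub hfin
      _ ≤ (upCrossings f n).ncard + (f ⁻¹' {0}).ncard := Set.ncard_union_le _ _
      _ ≤ (upCrossings f n).ncard + 1 := by gcongr
  exact (abs_ncard_inter_sub_ncard_image_inter_le ℝ hf (Set.finite_Icc 1 n) A).trans
    (mod_cast hleave)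

lemma ncard_upCrossings_le_count_sub_count_image_add_one (hf : f.Injective) (n : ℕ) :
    ((upCrossings f n).ncard : ℝ) ≤
      count {k | 0 < k ∧ k < f k} n - count (f '' {k | 0 < k ∧ k < f k}) n + 1 := by
  set A : Set ℕ := {k | 0 < k ∧ k < f k}
  have henter : A ∩ (f ⁻¹' Set.Icc 1 n \ Set.Icc 1 n) = ∅ := by
    refine Set.eq_empty_iff_forall_notMem.mpr fun k => ?_
    simp only [A, Set.mem_inter_iff, Set.mem_ofPred_eq, Set.mem_sdiff, Set.mem_preimage,
      Set.mem_Icc]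
    omega
  have hsub : upCrossings f n ⊆ insert 0 (A ∩ (Set.Icc 1 n \ f ⁻¹' Set.Icc 1 n)) := by
    intro k
    simp only [A, upCrossings, Set.mem_insert_iff, Set.mem_inter_iff, Set.mem_ofPred_eq,
      Set.mem_sdiff, Set.mem_preimage, Set.mem_Icc]
    omega
  have hleave : (upCrossings f n).ncard ≤
      (A ∩ (Set.Icc 1 n \ f ⁻¹' Set.Icc 1 n)).ncard + 1 :=
    (Set.ncard_le_ncard hsub
      (((Set.finite_Icc 1 n).sdiff.inter_of_right A).insert 0)).trans (Set.ncard_insert_le _ _)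
  rw [count, count, ncard_inter_sub_ncard_image_inter ℝ hf (Set.finite_Icc 1 n), henter,
    Set.ncard_empty, Nat.cast_zero, sub_zero]
  exact_mod_cast hleave

theorem inLevyGroup_iff_count_diff_tendsto_zero_general (hf : f.Injective) :
    Tendsto (fun n : ℕ => ((upCrossings f n).ncard : ℝ) / n) atTop (𝓝 0) ↔
      ∀ A : Set ℕ, Tendsto (fun n : ℕ => (count A n - count (f '' A) n) / n) atTop (𝓝 0) := by
  have hinv : Tendsto (fun n : ℕ => (1 : ℝ) / n) atTop (𝓝 0) := tendsto_one_div_atTop_nhds_zero_nat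
  constructor
  · intro hup A
    refine squeeze_zero_norm (fun n => ?_) (by simpa only [add_zero] using hup.add hinv)
    rw [norm_div, Real.norm_natCast, Real.norm_eq_abs, ← add_div]
    gcongr
    exact abs_count_sub_count_image_le_ncard_upCrossings_add_one hf A n
  · intro hdiff
    refine squeeze_zero (fun n => by positivity) (fun n => ?_)
      (by simpa only [add_zero] using (hdiff {k | 0 < k ∧ k < f k}).add hinv)
    rw [← add_div]
    gcongr
    exact ncard_upCrossings_le_count_sub_count_image_add_one hf n

end Crossing

/-- A permutation `π` of the positive integers belongs to the Lévy group iff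
`(A(n) − (πA)(n))/n → 0` for every `A ⊆ ℕ`. -/
theorem inLevyGroup_iff_count_diff_tendsto_zero (π : Equiv.Perm ℕ) :
    InLevyGroup π ↔
      ∀ A : Set ℕ,
        Filter.Tendsto (fun n : ℕ => (count A n - count (π '' A) n) / n)
          Filter.atTop (nhds 0) :=
  inLevyGroup_iff_count_diff_tendsto_zero_general π.injective
end

section
/- A real sequence (x_n) is statistically convergent to L ∈ ℝ if and only if there exists a set A ⊆ ℕ with asymptotic density d(A) = 1 such that the subsequence (x_n)_{n∈A} converges to L, i.e., x_n → L as n → ∞ along n ∈ A. -/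
open Filter Topology

/-!
The sets of asymptotic density one form a filter contained in `atTop`, and statistical convergence
is convergence along it. This filter is a P-filter: given an increasing sequence of density-zero
sets `B k`, delete from `B k` its elements below a threshold `φ k` past which `B k` has relative
frequency less than `1 / (k + 1)`; as the sequence is increasing, the union of the trimmed sets
agrees up to `n` with a subset of a single `B k`, `k` being the largest index with `φ k ≤ n`, and
so it still has density zero. Hence the countably many conditions that express convergence to `L`
can be met on one set of density one, up to finitely many exceptions for each of them.
-/

lemma count_nonneg (A : Set ℕ) (n : ℕ) : 0 ≤ count A n := Nat.cast_nonneg _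

lemma count_div_nonneg (A : Set ℕ) (n : ℕ) : 0 ≤ count A n / n :=
  div_nonneg (count_nonneg A n) n.cast_nonneg

lemma count_le_count_of_inter_Iic_subset {A B : Set ℕ} {n : ℕ} (h : A ∩ Set.Iic n ⊆ B) :
    count A n ≤ count B n := by
  have hsub : A ∩ Set.Icc 1 n ⊆ B ∩ Set.Icc 1 n := fun m hm => ⟨h ⟨hm.1, hm.2.2⟩, hm.2⟩
  exact Nat.cast_le.2 (Set.ncard_le_ncard hsub ((Set.finite_Icc 1 n).inter_of_right B))

lemma count_mono {A B : Set ℕ} (h : A ⊆ B) (n : ℕ) : count A n ≤ count B n :=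
  count_le_count_of_inter_Iic_subset (Set.inter_subset_left.trans h)

lemma count_union_le (A B : Set ℕ) (n : ℕ) : count (A ∪ B) n ≤ count A n + count B n := by
  unfold count
  rw [Set.union_inter_distrib_right]
  exact_mod_cast Set.ncard_union_le _ _

lemma count_le_ncard {A : Set ℕ} (hA : A.Finite) (n : ℕ) : count A n ≤ A.ncard :=
  Nat.cast_le.2 (Set.ncard_le_ncard Set.inter_subset_left hA)

lemma count_add_count_compl (A : Set ℕ) (n : ℕ) : count A n + count Aᶜ n = n := by
  have h := Set.ncard_inter_add_ncard_sdiff_eq_ncard (Set.Icc 1 n) A (Set.finite_Icc 1 n)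
  rw [Set.inter_comm, Set.sdiff_eq, Set.inter_comm _ Aᶜ, Set.ncard_eq_toFinset_card' (Set.Icc 1 n),
    Set.toFinset_Icc, Nat.card_Icc, Nat.add_sub_cancel] at h
  unfold count
  exact_mod_cast h

lemma HasDensity.compl {A : Set ℕ} {a : ℝ} (h : HasDensity A a) : HasDensity Aᶜ (1 - a) := by
  refine (h.const_sub 1).congr' ?_
  filter_upwards [eventually_ne_atTop 0] with n hn
  have hn' : (n : ℝ) ≠ 0 := Nat.cast_ne_zero.2 hn
  rw [eq_div_iff hn', sub_mul, one_mul, div_mul_cancel₀ _ hn', sub_eq_iff_eq_add',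
    count_add_count_compl]

lemma hasDensity_compl_zero_iff {A : Set ℕ} : HasDensity Aᶜ 0 ↔ HasDensity A 1 :=
  ⟨fun h => by simpa using h.compl, fun h => by simpa using h.compl⟩

lemma hasDensity_zero_iff {A : Set ℕ} :
    HasDensity A 0 ↔ ∀ ε > 0, ∀ᶠ n : ℕ in atTop, count A n / n < ε := by
  rw [HasDensity, tendsto_order]
  exact and_iff_right fun b hb => Eventually.of_forall fun n => hb.trans_le (count_div_nonneg A n)

lemma HasDensity.zero_mono {A B : Set ℕ} (hB : HasDensity B 0) (hAB : A ⊆ B) : HasDensity A 0 :=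
  squeeze_zero (count_div_nonneg A)
    (fun n => div_le_div_of_nonneg_right (count_mono hAB n) n.cast_nonneg) hB

lemma HasDensity.zero_union {A B : Set ℕ} (hA : HasDensity A 0) (hB : HasDensity B 0) :
    HasDensity (A ∪ B) 0 := by
  refine squeeze_zero (count_div_nonneg _) (fun n => ?_) (by simpa using Tendsto.add hA hB)
  rw [← add_div]
  exact div_le_div_of_nonneg_right (count_union_le A B n) n.cast_nonneg

lemma hasDensity_zero_of_finite {A : Set ℕ} (hA : A.Finite) : HasDensity A 0 :=
  squeeze_zero (count_div_nonneg A)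
    (fun n => div_le_div_of_nonneg_right (count_le_ncard hA n) n.cast_nonneg)
    (tendsto_const_div_atTop_nhds_zero_nat _)

/-- The filter of sets of asymptotic density one, whose convergence is statistical convergence.
It is encoded as the dual of the ideal of density-zero sets, whose closure properties are more
direct. -/
def densityOneFilter : Filter ℕ :=
  Filter.comk (fun A => HasDensity A 0) (hasDensity_zero_of_finite Set.finite_empty)
    (fun _ hB _ hAB => hB.zero_mono hAB) (fun _ hA _ hB => hA.zero_union hB)

lemma mem_densityOneFilter {A : Set ℕ} : A ∈ densityOneFilter ↔ HasDensity A 1 :=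
  Filter.mem_comk.trans hasDensity_compl_zero_iff

lemma compl_mem_densityOneFilter {A : Set ℕ} : Aᶜ ∈ densityOneFilter ↔ HasDensity A 0 := by
  rw [densityOneFilter, Filter.mem_comk, compl_compl]

lemma densityOneFilter_le_atTop : densityOneFilter ≤ atTop := by
  rw [← Nat.cofinite_eq_atTop]
  exact fun _ hA => Filter.mem_comk.2 (hasDensity_zero_of_finite hA)

lemma statTendsto_iff_tendsto_densityOneFilter {x : ℕ → ℝ} {L : ℝ} :
    StatTendsto x L ↔ Tendsto x densityOneFilter (𝓝 L) := by
  simp only [StatTendsto, Metric.tendsto_nhds, ← compl_mem_densityOneFilter, Filter.Eventually,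
    Set.compl_ofPred, not_le, Real.dist_eq, gt_iff_lt]

lemma exists_iUnion_inter_Ici_inter_Iic_subset {B : ℕ → Set ℕ} (hB : Monotone B) {φ : ℕ → ℕ}
    (hφ : StrictMono φ) {K n : ℕ} (hn : φ K ≤ n) :
    ∃ k ≥ K, φ k ≤ n ∧ (⋃ j, B j ∩ Set.Ici (φ j)) ∩ Set.Iic n ⊆ B k := by
  have le_of_φ_le {j : ℕ} (hj : φ j ≤ n) : j ≤ n := (hφ.id_le j).trans hj
  refine ⟨Nat.findGreatest (φ · ≤ n) n, Nat.le_findGreatest (le_of_φ_le hn) hn,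
    Nat.findGreatest_spec (P := (φ · ≤ n)) (le_of_φ_le hn) hn, ?_⟩
  rintro m ⟨hm, hmn⟩
  obtain ⟨j, hmB, hjm⟩ := Set.mem_iUnion.1 hm
  have hjn : φ j ≤ n := le_trans hjm hmn
  exact hB (Nat.le_findGreatest (le_of_φ_le hjn) hjn) hmB

lemma exists_hasDensity_zero_iUnion_inter_Ici {B : ℕ → Set ℕ} (hB : Monotone B)
    (hB0 : ∀ k, HasDensity (B k) 0) :
    ∃ φ : ℕ → ℕ, HasDensity (⋃ k, B k ∩ Set.Ici (φ k)) 0 := by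
  have hfreq (k : ℕ) : ∀ᶠ N : ℕ in atTop, ∀ n ≥ N, count (B k) n / n < 1 / ((k : ℝ) + 1) :=
    eventually_forall_ge_atTop.2 (hasDensity_zero_iff.1 (hB0 k) _ Nat.one_div_pos_of_nat)
  obtain ⟨φ, hφ, hBφ⟩ := extraction_forall_of_eventually hfreq
  refine ⟨φ, hasDensity_zero_iff.2 fun ε hε => ?_⟩
  obtain ⟨K, hK⟩ := exists_nat_one_div_lt hε
  filter_upwards [eventually_ge_atTop (φ K)] with n hn
  obtain ⟨k, hKk, hkn, hsub⟩ := exists_iUnion_inter_Ici_inter_Iic_subset hB hφ hn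
  calc count (⋃ j, B j ∩ Set.Ici (φ j)) n / n
      ≤ count (B k) n / n :=
        div_le_div_of_nonneg_right (count_le_count_of_inter_Iic_subset hsub) n.cast_nonneg
    _ < 1 / ((k : ℝ) + 1) := hBφ k n hkn
    _ ≤ 1 / ((K : ℝ) + 1) := Nat.one_div_le_one_div hKk
    _ < ε := hK

lemma densityOneFilter_le_iff {l : Filter ℕ} [l.IsCountablyGenerated] :
    densityOneFilter ≤ l ↔ ∃ A ∈ densityOneFilter, atTop ⊓ 𝓟 A ≤ l := by
  constructor
  · intro hl
    obtain ⟨s, hs⟩ := l.exists_antitone_basis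
    have hmono : Monotone fun k => (s k)ᶜ :=
      fun _ _ hjk => Set.compl_subset_compl.2 (hs.antitone hjk)
    have hs0 (k : ℕ) : HasDensity (s k)ᶜ 0 := Filter.mem_comk.1 (hl (hs.mem k))
    obtain ⟨φ, hφ⟩ := exists_hasDensity_zero_iUnion_inter_Ici hmono hs0
    refine ⟨_, compl_mem_densityOneFilter.2 hφ, hs.1.ge_iff.2 fun k _ => ?_⟩
    filter_upwards [mem_inf_of_left (Ici_mem_atTop (φ k)),
      mem_inf_of_right (mem_principal_self _)] with n hn hnC
    by_contra hns
    exact hnC (Set.mem_iUnion.2 ⟨k, hns, hn⟩)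
  · rintro ⟨A, hA, hAl⟩
    exact (le_inf densityOneFilter_le_atTop (le_principal_iff.2 hA)).trans hAl

theorem statTendsto_iff_tendsto_along_density_one_set_general {α : Type*} {l : Filter α}
    [l.IsCountablyGenerated] (x : ℕ → α) :
    Tendsto x densityOneFilter l ↔
      ∃ A : Set ℕ, HasDensity A 1 ∧ Tendsto x (atTop ⊓ 𝓟 A) l := by
  simp only [tendsto_iff_comap, densityOneFilter_le_iff, mem_densityOneFilter]

/-- A real sequence converges statistically to `L` iff it converges to `L`
along a set of asymptotic density one. -/
theorem statTendsto_iff_tendsto_along_density_one_set (x : ℕ → ℝ) (L : ℝ) :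
    StatTendsto x L ↔
      ∃ A : Set ℕ, HasDensity A 1 ∧
        Filter.Tendsto x (Filter.atTop ⊓ Filter.principal A) (nhds L) :=
  statTendsto_iff_tendsto_densityOneFilter.trans
    (statTendsto_iff_tendsto_along_density_one_set_general x)
end

section
/- A permutation π of the positive integers belongs to the Lévy group 𝒢 if and only if the sequence (π(n)/n) converges statistically to 1, i.e., for every ε > 0 the set {n : |π(n)/n − 1| ≥ ε} has asymptotic density zero. -/
open Filter Topology

/-!
Both conditions are equivalent to an intermediate one: for every `a > 0`, only `o(n)` points
`k ≤ n` satisfy `|f k - k| ≥ a n`. The points below `δ n` are at most `δ n` in number, and every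
other `k ≤ n` is comparable to `n`; this gives the equivalence with statistical convergence.
If `k ≤ n < f k` and `f k - k < a n`, then `k` is one of the last `a n + 1` points of `[0, n]`, so
negligible displacement bounds the upward crossings. For the converse, count the pairs of a
displaced point `k ≤ n` and a cut `m < n + M` that it crosses. A point displaced by `M` crosses at
least `M` of these cuts, and by injectivity no more points cross a cut downwards than upwards.
Hence, with `M = ⌊a n⌋`, there are at most `(2 / M) ∑_{m < n + M} o(m) = o(n)` displaced points.
-/

open Asymptotics

section Asymptotics

variable {α : Type*} {l : Filter α}

lemma isLittleO_of_forall_exists_le_add_mul {f u : α → ℝ} (hf : 0 ≤ f) (hu : 0 ≤ u)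
    (h : ∀ δ : ℝ, 0 < δ → ∃ g : α → ℝ, g =o[l] u ∧ ∀ x, f x ≤ g x + δ * u x) : f =o[l] u := by
  refine isLittleO_iff.2 fun c hc => ?_
  obtain ⟨g, hg, hfg⟩ := h (c / 2) (by positivity)
  filter_upwards [hg.bound (half_pos hc)] with x hx
  rw [Real.norm_of_nonneg (hu x)] at hx ⊢
  rw [Real.norm_of_nonneg (hf x)]
  linarith [hfg x, (le_abs_self (g x)).trans hx]

lemma isLittleO_natCast_iff_tendsto_div {f : ℕ → ℝ} :
    f =o[atTop] (fun n : ℕ => (n : ℝ)) ↔ Tendsto (fun n : ℕ => f n / n) atTop (𝓝 0) := by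
  refine isLittleO_iff_tendsto' ?_
  filter_upwards [eventually_ne_atTop 0] with n hn hn'
  exact absurd (Nat.cast_eq_zero.1 hn') hn

lemma isLittleO_const_natCast {E : Type*} [NormedAddCommGroup E] (c : E) :
    (fun _ : ℕ => c) =o[atTop] (fun n : ℕ => (n : ℝ)) :=
  isLittleO_const_left.2 <| .inr <| tendsto_norm_atTop_atTop.comp tendsto_natCast_atTop_atTop

lemma isLittleO_sum_range_sq {E : Type*} [NormedAddCommGroup E] {f : ℕ → E}
    (hf : f =o[atTop] (fun n : ℕ => (n : ℝ))) :
    (fun n => ∑ i ∈ Finset.range n, f i) =o[atTop] (fun n : ℕ => (n : ℝ) ^ 2) := by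
  have hsucc : f =o[atTop] (fun n : ℕ => (n : ℝ) + 1) :=
    hf.trans_le fun n => by
      rw [Real.norm_of_nonneg n.cast_nonneg, Real.norm_of_nonneg (by positivity)]
      linarith
  have hdiv : Tendsto (fun n => ∑ i ∈ Finset.range n, ((i : ℝ) + 1)) atTop atTop := by
    refine tendsto_atTop_mono (fun n => ?_) tendsto_natCast_atTop_atTop
    simpa using Finset.card_nsmul_le_sum (Finset.range n) (fun i => (i : ℝ) + 1) 1 (by simp)
  refine (hsucc.sum_range (fun n => by positivity) hdiv).trans_le fun n => ?_
  rw [Real.norm_of_nonneg (by positivity), Real.norm_of_nonneg (by positivity), sq]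
  simpa using Finset.sum_le_card_nsmul (Finset.range n) (fun i => (i : ℝ) + 1) n
    (fun i hi => by exact_mod_cast Finset.mem_range.1 hi)

lemma isLittleO_of_mul_isTheta {𝕜 : Type*} [NormedField 𝕜] {f g u v : α → 𝕜}
    (h : (fun x => f x * g x) =o[l] (fun x => u x * v x)) (hgv : g =Θ[l] v)
    (hv : ∀ᶠ x in l, v x ≠ 0) : f =o[l] u := by
  refine (h.mul_isBigO hgv.inv.isBigO).congr' ?_ ?_
  · filter_upwards [hgv.eq_zero_iff, hv] with x hx hvx
    exact mul_inv_cancel_right₀ (mt hx.1 hvx) (f x)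
  · filter_upwards [hv] with x hvx
    exact mul_inv_cancel_right₀ hvx (u x)

lemma natFloor_mul_isTheta {a : ℝ} (ha : 0 < a) :
    (fun n : ℕ => (⌊a * n⌋₊ : ℝ)) =Θ[atTop] (fun n : ℕ => (n : ℝ)) := by
  have hlim : Tendsto (fun n : ℕ => (⌊a * n⌋₊ : ℝ) / n) atTop (𝓝 a) :=
    (tendsto_nat_floor_mul_div_atTop ha.le).comp tendsto_natCast_atTop_atTop
  exact (isTheta_of_div_tendsto_nhds_ne_zero hlim ha.ne').symm

end Asymptotics

lemma le_abs_div_sub_one_iff {ε x y : ℝ} (hy : 0 < y) : ε ≤ |x / y - 1| ↔ ε * y ≤ |x - y| := by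
  rw [div_sub_one hy.ne', abs_div, abs_of_pos hy, le_div_iff₀ hy]

/-- The points that `f` carries upwards across the cut between `m` and `m + 1`; the Lévy group is
defined by counting these. -/
def upCrossing (f : ℕ → ℕ) (m : ℕ) : Set ℕ := {k | k ≤ m ∧ m < f k}

/-- The points that `f` carries downwards across the cut between `m` and `m + 1`. -/
def downCrossing (f : ℕ → ℕ) (m : ℕ) : Set ℕ := {k | f k ≤ m ∧ m < k}

/-- The points of `[0, n]` that `f` moves by a distance of at least `d`. -/
def displaced (f : ℕ → ℕ) (n : ℕ) (d : ℝ) : Set ℕ := {k | k ≤ n ∧ d ≤ |(f k : ℝ) - k|}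

/-- For every `a > 0`, only `o(n)` points of `[0, n]` are moved by `f` by at least `a n`. The
threshold is the same for all points of `[0, n]`, whereas in the statistical convergence of
`f k / k` it is proportional to the point `k`. -/
def HasNegligibleDisplacement (f : ℕ → ℕ) : Prop :=
  ∀ a : ℝ, 0 < a →
    (fun n : ℕ => ((displaced f n (a * n)).ncard : ℝ)) =o[atTop] (fun n : ℕ => (n : ℝ))

lemma finite_upCrossing (f : ℕ → ℕ) (m : ℕ) : (upCrossing f m).Finite :=
  (Set.finite_Iic m).subset fun _ hk => hk.1

lemma finite_displaced (f : ℕ → ℕ) (n : ℕ) (d : ℝ) : (displaced f n d).Finite :=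
  (Set.finite_Iic n).subset fun _ hk => hk.1

lemma displaced_anti (f : ℕ → ℕ) (n : ℕ) : Antitone (displaced f n) :=
  fun _ _ hd _ hk => ⟨hk.1, hd.trans hk.2⟩

lemma finite_downCrossing {f : ℕ → ℕ} (hf : f.Injective) (m : ℕ) : (downCrossing f m).Finite :=
  ((Set.finite_Iic m).preimage hf.injOn).subset fun _ hk => hk.1

lemma ncard_downCrossing_le_ncard_upCrossing {f : ℕ → ℕ} (hf : f.Injective) (m : ℕ) :
    (downCrossing f m).ncard ≤ (upCrossing f m).ncard := by
  have hcard : (f ⁻¹' Set.Iic m).ncard ≤ (Set.Iic m).ncard :=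
    Set.ncard_le_ncard_of_injOn f (fun _ hk => hk) hf.injOn (Set.finite_Iic m)
  have hdown : downCrossing f m = f ⁻¹' Set.Iic m \ Set.Iic m := by
    ext k; simp [downCrossing]
  have hup : upCrossing f m = Set.Iic m \ f ⁻¹' Set.Iic m := by
    ext k; simp [upCrossing]
  rw [hdown, hup]
  exact (Set.ncard_le_ncard_iff_ncard_sdiff_le_ncard_sdiff
    ((Set.finite_Iic m).preimage hf.injOn) (Set.finite_Iic m)).1 hcard

lemma ncard_upCrossing_union_downCrossing_le {f : ℕ → ℕ} (hf : f.Injective) (m : ℕ) :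
    (upCrossing f m ∪ downCrossing f m).ncard ≤ 2 * (upCrossing f m).ncard := by
  have hunion := Set.ncard_union_le (upCrossing f m) (downCrossing f m)
  have hdown := ncard_downCrossing_le_ncard_upCrossing hf m
  lia

open Classical in
lemma le_card_filter_crossing_of_mem_displaced {f : ℕ → ℕ} {n M k : ℕ} (hk : k ∈ displaced f n M) :
    M ≤ {m ∈ Finset.range (n + M) | k ∈ upCrossing f m ∪ downCrossing f m}.card := by
  obtain ⟨hkn, hM⟩ := hk
  rcases le_abs.1 hM with hup | hdown
  · have hup' : k + M ≤ f k := by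
      have : (k : ℝ) + M ≤ f k := by linarith
      exact_mod_cast this
    calc M = (Finset.Ico k (k + M)).card := by simp
      _ ≤ _ := Finset.card_le_card fun m hm => by
        simp only [Finset.mem_Ico] at hm
        simp only [Finset.mem_filter, Finset.mem_range]
        exact ⟨by lia, .inl ⟨hm.1, by lia⟩⟩
  · have hdown' : f k + M ≤ k := by
      have : (f k : ℝ) + M ≤ k := by linarith
      exact_mod_cast this
    calc M ≤ (Finset.Ico (f k) k).card := by rw [Nat.card_Ico]; lia
      _ ≤ _ := Finset.card_le_card fun m hm => by
        simp only [Finset.mem_Ico] at hm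
        simp only [Finset.mem_filter, Finset.mem_range]
        exact ⟨by lia, .inr hm⟩

lemma ncard_displaced_mul_le_sum_ncard_upCrossing {f : ℕ → ℕ} (hf : f.Injective) (n M : ℕ) :
    (displaced f n M).ncard * M ≤ 2 * ∑ m ∈ Finset.range (n + M), (upCrossing f m).ncard := by
  classical
  let D := (finite_displaced f n M).toFinset
  let crosses (k m : ℕ) : Prop := k ∈ upCrossing f m ∪ downCrossing f m
  calc (displaced f n M).ncard * M
      = D.card • M := by rw [Set.ncard_eq_toFinset_card _ (finite_displaced f n M), smul_eq_mul]
    _ ≤ ∑ k ∈ D, ((Finset.range (n + M)).bipartiteAbove crosses k).card :=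
        Finset.card_nsmul_le_sum _ _ _ fun k hk =>
          le_card_filter_crossing_of_mem_displaced ((Set.Finite.mem_toFinset _).1 hk)
    _ = ∑ m ∈ Finset.range (n + M), (D.bipartiteBelow crosses m).card :=
        Finset.sum_card_bipartiteAbove_eq_sum_card_bipartiteBelow _
    _ ≤ ∑ m ∈ Finset.range (n + M), 2 * (upCrossing f m).ncard := by
        refine Finset.sum_le_sum fun m _ => ?_
        refine le_trans ?_ (ncard_upCrossing_union_downCrossing_le hf m)
        rw [← Set.ncard_coe_finset]
        exact Set.ncard_le_ncard (fun k hk => (Finset.mem_filter.1 hk).2)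
          ((finite_upCrossing f m).union (finite_downCrossing hf m))
    _ = _ := (Finset.mul_sum _ _ _).symm

lemma hasNegligibleDisplacement_of_isLittleO_ncard_upCrossing {f : ℕ → ℕ}
    (hf : f.Injective)
    (h : (fun n => ((upCrossing f n).ncard : ℝ)) =o[atTop] (fun n : ℕ => (n : ℝ))) :
    HasNegligibleDisplacement f := by
  intro a ha
  let M (n : ℕ) : ℕ := ⌊a * n⌋₊
  have hM : (fun n => (M n : ℝ)) =Θ[atTop] (fun n : ℕ => (n : ℝ)) := natFloor_mul_isTheta ha
  have hnM : (fun n => ((n + M n : ℕ) : ℝ)) =O[atTop] (fun n : ℕ => (n : ℝ)) := by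
    simpa only [Nat.cast_add] using (isBigO_refl _ _).add hM.isBigO
  have hsum : (fun n => ∑ m ∈ Finset.range (n + M n), ((upCrossing f m).ncard : ℝ))
      =o[atTop] (fun n : ℕ => (n : ℝ) ^ 2) :=
    ((isLittleO_sum_range_sq h).comp_tendsto
      (tendsto_atTop_mono (fun n => n.le_add_right (M n)) tendsto_id)).trans_isBigO (hnM.pow 2)
  have hmul : (fun n => ((displaced f n (M n)).ncard : ℝ) * M n)
      =o[atTop] (fun n : ℕ => (n : ℝ) * n) := by
    simp only [← sq]
    refine (IsBigO.of_norm_le fun n => ?_).trans_isLittleO (hsum.const_mul_left 2)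
    rw [Real.norm_of_nonneg (by positivity)]
    exact_mod_cast ncard_displaced_mul_le_sum_ncard_upCrossing hf n (M n)
  have hfloor : (fun n => ((displaced f n (M n)).ncard : ℝ)) =o[atTop] (fun n : ℕ => (n : ℝ)) :=
    isLittleO_of_mul_isTheta hmul hM <|
      (eventually_ne_atTop 0).mono fun _ hn => Nat.cast_ne_zero.2 hn
  refine (IsBigO.of_norm_le fun n => ?_).trans_isLittleO hfloor
  rw [Real.norm_natCast]
  exact_mod_cast Set.ncard_le_ncard (displaced_anti f n (Nat.floor_le (by positivity)))
    (finite_displaced f n (M n))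

lemma ncard_upCrossing_le (f : ℕ → ℕ) (n : ℕ) {d : ℝ} (hd : 0 ≤ d) :
    ((upCrossing f n).ncard : ℝ) ≤ (displaced f n d).ncard + (d + 1) := by
  have hsub : upCrossing f n ⊆ displaced f n d ∪ Set.Icc (n - ⌊d⌋₊) n := by
    rintro k ⟨hkn, hnk⟩
    refine or_iff_not_imp_left.2 fun hk => ⟨?_, hkn⟩
    have hlt : (f k : ℝ) - k < d :=
      (le_abs_self _).trans_lt (not_le.1 fun hd => hk ⟨hkn, hd⟩)
    have hfloor : f k - k ≤ ⌊d⌋₊ := Nat.le_floor <| by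
      rw [Nat.cast_sub (hkn.trans hnk.le)]; exact hlt.le
    lia
  have hcard : (upCrossing f n).ncard ≤ (displaced f n d).ncard + (⌊d⌋₊ + 1) := by
    have hunion := (Set.ncard_le_ncard hsub ((finite_displaced f n d).union
      (Set.finite_Icc _ _))).trans (Set.ncard_union_le _ _)
    rw [Set.ncard_eq_toFinset_card' (Set.Icc _ _), Set.toFinset_Icc, Nat.card_Icc] at hunion
    lia
  calc ((upCrossing f n).ncard : ℝ) ≤ (displaced f n d).ncard + (⌊d⌋₊ + 1) := mod_cast hcard
    _ ≤ _ := by gcongr; exact Nat.floor_le hd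

lemma HasNegligibleDisplacement.isLittleO_ncard_upCrossing {f : ℕ → ℕ}
    (h : HasNegligibleDisplacement f) :
    (fun n => ((upCrossing f n).ncard : ℝ)) =o[atTop] (fun n : ℕ => (n : ℝ)) := by
  refine isLittleO_of_forall_exists_le_add_mul (fun n => Nat.cast_nonneg _)
    (fun n => Nat.cast_nonneg _) fun δ hδ =>
      ⟨_, (h δ hδ).add (isLittleO_const_natCast (1 : ℝ)), fun n => ?_⟩
  linarith [ncard_upCrossing_le f n (d := δ * n) (by positivity)]

lemma count_le_ncard_displaced_add (f : ℕ → ℕ) {ε d : ℝ} (hε : 0 ≤ ε) (hd : 0 ≤ d) (n : ℕ) :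
    count {k | ε ≤ |(f k : ℝ) / k - 1|} n ≤ (displaced f n (ε * d)).ncard + d := by
  have hsub : {k : ℕ | ε ≤ |(f k : ℝ) / k - 1|} ∩ Set.Icc 1 n ⊆
      displaced f n (ε * d) ∪ Set.Icc 1 ⌊d⌋₊ := by
    rintro k ⟨hk, hk1, hkn⟩
    rcases le_or_gt k ⌊d⌋₊ with hkd | hkd
    · exact .inr ⟨hk1, hkd⟩
    · refine .inl ⟨hkn, ?_⟩
      calc ε * d ≤ ε * k := by gcongr; exact ((Nat.floor_lt hd).1 hkd).le
        _ ≤ _ := (le_abs_div_sub_one_iff (Nat.cast_pos.2 hk1)).1 hk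
  have hcard := (Set.ncard_le_ncard hsub ((finite_displaced f n _).union
    (Set.finite_Icc _ _))).trans (Set.ncard_union_le _ _)
  rw [Set.ncard_eq_toFinset_card' (Set.Icc 1 ⌊d⌋₊), Set.toFinset_Icc, Nat.card_Icc,
    Nat.add_sub_cancel] at hcard
  calc count {k | ε ≤ |(f k : ℝ) / k - 1|} n
      ≤ (displaced f n (ε * d)).ncard + ⌊d⌋₊ := by unfold count; exact_mod_cast hcard
    _ ≤ _ := by gcongr; exact Nat.floor_le hd

lemma ncard_displaced_le_count_add_one (f : ℕ → ℕ) {a : ℝ} (ha : 0 ≤ a) (n : ℕ) :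
    ((displaced f n (a * n)).ncard : ℝ) ≤ count {k | a ≤ |(f k : ℝ) / k - 1|} n + 1 := by
  have hsub : displaced f n (a * n) ⊆
      insert 0 ({k : ℕ | a ≤ |(f k : ℝ) / k - 1|} ∩ Set.Icc 1 n) := by
    rintro k ⟨hkn, hk⟩
    rcases Nat.eq_zero_or_pos k with rfl | hpos
    · exact Set.mem_insert _ _
    · refine .inr ⟨(le_abs_div_sub_one_iff (Nat.cast_pos.2 hpos)).2 ?_, hpos, hkn⟩
      calc a * k ≤ a * n := by gcongr
        _ ≤ _ := hk
  have hcard := (Set.ncard_le_ncard hsub (((Set.finite_Icc 1 n).inter_of_right _).insert 0)).trans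
    (Set.ncard_insert_le _ _)
  unfold count
  exact_mod_cast hcard

lemma hasNegligibleDisplacement_iff_statTendsto {f : ℕ → ℕ} :
    HasNegligibleDisplacement f ↔ StatTendsto (fun n : ℕ => (f n : ℝ) / n) 1 := by
  constructor
  · intro h ε hε
    refine isLittleO_natCast_iff_tendsto_div.1 <| isLittleO_of_forall_exists_le_add_mul
      (fun n => Nat.cast_nonneg _) (fun n => Nat.cast_nonneg _) fun δ hδ =>
        ⟨_, h (ε * δ) (by positivity), fun n => ?_⟩
    rw [mul_assoc]
    exact count_le_ncard_displaced_add f hε.le (by positivity) n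
  · intro h a ha
    have hcount := isLittleO_natCast_iff_tendsto_div.2 (h a ha)
    refine (IsBigO.of_norm_le fun n => ?_).trans_isLittleO
      (hcount.add (isLittleO_const_natCast (1 : ℝ)))
    rw [Real.norm_natCast]
    exact ncard_displaced_le_count_add_one f ha.le n

theorem inLevyGroup_iff_statTendsto_general {f : ℕ → ℕ} (hf : f.Injective) :
    Tendsto (fun n : ℕ => ({k : ℕ | k ≤ n ∧ n < f k}.ncard : ℝ) / n) atTop (𝓝 0) ↔
      StatTendsto (fun n : ℕ => (f n : ℝ) / n) 1 := by
  rw [← hasNegligibleDisplacement_iff_statTendsto]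
  refine isLittleO_natCast_iff_tendsto_div.symm.trans ⟨?_, ?_⟩
  · exact hasNegligibleDisplacement_of_isLittleO_ncard_upCrossing hf
  · exact HasNegligibleDisplacement.isLittleO_ncard_upCrossing

/-- A permutation `π` belongs to the Lévy group iff `π(n)/n` converges
statistically to `1`. -/
theorem inLevyGroup_iff_statTendsto (π : Equiv.Perm ℕ) :
    InLevyGroup π ↔ StatTendsto (fun n : ℕ => (π n : ℝ) / n) 1 :=
  inLevyGroup_iff_statTendsto_general π.injective
end

section
/- If π is a permutation of the positive integers such that every density measure μ satisfies μ(πA) = μ(A) for every A ⊆ ℕ, then π belongs to the Lévy group 𝒢. -/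
open Filter Topology

/-! Let `ε > 0` and suppose that `|{k ≤ n < f k}| ≥ ε n` for infinitely many `n`. Choose such scales
`u 0 < u 1 < ⋯` growing so fast that `u i / u (i + 1) → 0`, and let `A` consist of the points of
`(u i, u (i + 1)]` that `f` carries beyond `u (i + 1)`, for all `i`. Discarding the points `≤ u i`
costs a vanishing proportion, so `A` fills asymptotically a proportion `≥ ε` of `[1, u (i + 1)]`.
But `f(A)` meets `[1, u (i + 1)]` only in images of points `≤ u i`, a vanishing proportion.
Hence the limit of the relative counting functions along a free ultrafilter containing the range
of `u` is a density measure giving mass `≥ ε` to `A` and `0` to `f(A)`. -/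

theorem count_le (A : Set ℕ) (n : ℕ) : count A n ≤ n := by
  have h := Set.ncard_le_ncard (Set.inter_subset_right (s := A)) (Set.finite_Icc 1 n)
  rw [Set.ncard_Icc_nat, Nat.add_sub_cancel] at h
  exact Nat.cast_le.mpr h

theorem count_univ (n : ℕ) : count Set.univ n = n := by
  rw [count, Set.univ_inter, Set.ncard_Icc_nat, Nat.add_sub_cancel]

theorem count_union {A B : Set ℕ} (hAB : Disjoint A B) (n : ℕ) :
    count (A ∪ B) n = count A n + count B n := by
  unfold count
  rw [Set.union_inter_distrib_right, Set.ncard_union_eq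
    (hAB.mono Set.inter_subset_left Set.inter_subset_left)
    ((Set.finite_Icc 1 n).inter_of_right A) ((Set.finite_Icc 1 n).inter_of_right B), Nat.cast_add]

theorem count_div_mem_Icc (A : Set ℕ) (n : ℕ) : count A n / n ∈ Set.Icc (0 : ℝ) 1 :=
  ⟨div_nonneg (Nat.cast_nonneg _) n.cast_nonneg, div_le_one_of_le₀ (count_le A n) n.cast_nonneg⟩

/-- The density of `A` along the ultrafilter `𝒰`, i.e. the limit of `A(n)/n` along `𝒰`. For free `𝒰`
it is a density measure. -/
noncomputable def ultraDensity (𝒰 : Ultrafilter ℕ) (A : Set ℕ) : ℝ :=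
  ulim 𝒰 fun n => count A n / n

theorem tendsto_ultraDensity (𝒰 : Ultrafilter ℕ) (A : Set ℕ) :
    Tendsto (fun n : ℕ => count A n / n) 𝒰 (𝓝 (ultraDensity 𝒰 A)) := by
  obtain ⟨x, -, hx⟩ := isCompact_Icc.ultrafilter_le_nhds' (𝒰.map fun n : ℕ => count A n / n)
    (mem_map.2 (Eventually.of_forall (count_div_mem_Icc A)))
  exact tendsto_nhds_limUnder ⟨x, hx⟩

theorem isDensityMeasure_ultraDensity {𝒰 : Ultrafilter ℕ} (h𝒰 : (𝒰 : Filter ℕ) ≤ atTop) :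
    IsDensityMeasure (ultraDensity 𝒰) := by
  have hlim := tendsto_ultraDensity 𝒰
  refine ⟨⟨fun A => ?nonneg, fun A => ?le_one, ?univ, fun A B hAB => ?union⟩,
    fun A a ha => ?density⟩
  case nonneg => exact ge_of_tendsto' (hlim A) fun n => (count_div_mem_Icc A n).1
  case le_one => exact le_of_tendsto' (hlim A) fun n => (count_div_mem_Icc A n).2
  case univ =>
    refine tendsto_nhds_unique_of_eventuallyEq (hlim Set.univ) tendsto_const_nhds ?_
    filter_upwards [h𝒰 (eventually_ne_atTop 0)] with n hn
    rw [count_univ, div_self (Nat.cast_ne_zero.mpr hn)]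
  case union =>
    refine tendsto_nhds_unique (hlim (A ∪ B)) (((hlim A).add (hlim B)).congr fun n => ?_)
    rw [count_union hAB, add_div]
  case density => exact tendsto_nhds_unique (hlim A) (ha.mono_left h𝒰)

theorem exists_strictMono_tendsto_div_succ_zero {p : ℕ → Prop} (hp : ∃ᶠ n in atTop, p n) :
    ∃ u : ℕ → ℕ, StrictMono u ∧ (∀ i, p (u i)) ∧
      Tendsto (fun i => ((u i : ℝ) + 1) / u (i + 1)) atTop (𝓝 0) := by
  obtain ⟨u, hpu, hsq⟩ := exists_seq_of_forall_finset_exists p (fun m n => (m + 1) ^ 2 ≤ n)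
    fun s _ => by
      obtain ⟨n, hn, hpn⟩ := frequently_atTop.1 hp (s.sup fun m => (m + 1) ^ 2)
      exact ⟨n, hpn, fun m hm => (Finset.le_sup (f := fun m => (m + 1) ^ 2) hm).trans hn⟩
  have hu : StrictMono u := fun i j hij => by nlinarith [hsq i j hij]
  refine ⟨u, hu, hpu, squeeze_zero (fun i => by positivity) (fun i => ?_)
    (tendsto_one_div_add_atTop_nhds_zero_nat.comp hu.tendsto_atTop)⟩
  have hsq_succ : ((u i : ℝ) + 1) ^ 2 ≤ u (i + 1) := mod_cast hsq i (i + 1) i.lt_succ_self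
  calc ((u i : ℝ) + 1) / u (i + 1) ≤ (u i + 1) / (u i + 1) ^ 2 := by gcongr
    _ = 1 / (u i + 1) := by field_simp

/-- The points of `[0, n]` carried beyond `n` by `f`; the Lévy group condition on a permutation
says that their proportion tends to zero. -/
def crossings (f : ℕ → ℕ) (n : ℕ) : Set ℕ :=
  {k | k ≤ n ∧ n < f k}

/-- The points of the blocks `(u i, u (i + 1)]` carried by `f` beyond the end of their block. For
`u` growing fast enough, this is the set whose density drops under `f`. -/
def blockCrossings (f u : ℕ → ℕ) : Set ℕ :=
  ⋃ i, crossings f (u (i + 1)) \ Set.Iic (u i)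

section BlockCrossings

variable (f : ℕ → ℕ) {u : ℕ → ℕ}

theorem ncard_crossings_le_count_blockCrossings_add (u : ℕ → ℕ) (i : ℕ) :
    ((crossings f (u (i + 1))).ncard : ℝ) ≤
      count (blockCrossings f u) (u (i + 1)) + (u i + 1) := by
  have hsub : crossings f (u (i + 1)) ⊆
      blockCrossings f u ∩ Set.Icc 1 (u (i + 1)) ∪ Set.Iic (u i) := by
    intro k hk
    rcases le_or_gt k (u i) with hki | hki
    · exact Or.inr hki
    · exact Or.inl ⟨Set.mem_iUnion.2 ⟨i, hk, hki.not_ge⟩, Nat.one_le_of_lt hki, hk.1⟩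
  have hcard := (Set.ncard_le_ncard hsub (((Set.finite_Icc _ _).inter_of_right _).union
    (Set.finite_Iic _))).trans (Set.ncard_union_le _ _)
  rw [Set.ncard_Iic_nat] at hcard
  unfold count
  exact_mod_cast hcard

theorem image_blockCrossings_inter_Iic_subset (hu : StrictMono u) (i : ℕ) :
    f '' blockCrossings f u ∩ Set.Iic (u (i + 1)) ⊆ f '' Set.Iic (u i) := by
  rintro _ ⟨⟨k, hk, rfl⟩, hfk⟩
  obtain ⟨j, ⟨hkj, hjf⟩, -⟩ := Set.mem_iUnion.1 hk
  have hji : j + 1 < i + 1 := hu.lt_iff_lt.1 (hjf.trans_le hfk)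
  exact ⟨k, hkj.trans (hu.monotone (Nat.le_of_lt_succ hji)), rfl⟩

theorem count_image_blockCrossings_le (hu : StrictMono u) (i : ℕ) :
    count (f '' blockCrossings f u) (u (i + 1)) ≤ u i + 1 := by
  have hsub := (Set.inter_subset_inter_right (f '' blockCrossings f u)
    (Set.Icc_subset_Iic_self (a := 1))).trans (image_blockCrossings_inter_Iic_subset f hu i)
  have hcard := (Set.ncard_le_ncard hsub ((Set.finite_Iic _).image f)).trans
    (Set.ncard_image_le (Set.finite_Iic _))
  rw [Set.ncard_Iic_nat] at hcard
  unfold count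
  exact_mod_cast hcard

end BlockCrossings

theorem exists_le_ultraDensity_and_ultraDensity_image_le_zero {f : ℕ → ℕ} {ε : ℝ}
    (hf : ∃ᶠ n : ℕ in atTop, ε ≤ (crossings f n).ncard / n) :
    ∃ 𝒰 : Ultrafilter ℕ, (𝒰 : Filter ℕ) ≤ atTop ∧
      ∃ A : Set ℕ, ε ≤ ultraDensity 𝒰 A ∧ ultraDensity 𝒰 (f '' A) ≤ 0 := by
  obtain ⟨u, hu, hεu, hratio⟩ := exists_strictMono_tendsto_div_succ_zero hf
  have hshift : Tendsto (fun i => u (i + 1)) atTop atTop :=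
    hu.tendsto_atTop.comp (tendsto_add_atTop_nat 1)
  let 𝒰 : Ultrafilter ℕ := (hyperfilter ℕ).map fun i => u (i + 1)
  have hlim (B : Set ℕ) : Tendsto (fun i => count B (u (i + 1)) / u (i + 1))
      (hyperfilter ℕ) (𝓝 (ultraDensity 𝒰 B)) :=
    (tendsto_ultraDensity 𝒰 B).comp (f := fun i => u (i + 1)) tendsto_map
  have hratio_hyper := hratio.mono_left Nat.hyperfilter_le_atTop
  refine ⟨𝒰, hshift.mono_left Nat.hyperfilter_le_atTop, blockCrossings f u, ?_, ?_⟩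
  · have hsum := (hlim (blockCrossings f u)).add hratio_hyper
    rw [add_zero] at hsum
    refine ge_of_tendsto' hsum fun i => (hεu (i + 1)).trans ?_
    rw [← add_div]
    gcongr
    exact ncard_crossings_le_count_blockCrossings_add f u i
  · refine le_of_tendsto_of_tendsto' (hlim _) hratio_hyper fun i => ?_
    gcongr
    exact count_image_blockCrossings_le f hu i

theorem inLevyGroup_of_all_densityMeasures_invariant_general (f : ℕ → ℕ)
    (h : ∀ μ : Set ℕ → ℝ, IsDensityMeasure μ → ∀ A : Set ℕ, μ A ≤ μ (f '' A)) :
    Tendsto (fun n : ℕ => ((crossings f n).ncard : ℝ) / n) atTop (𝓝 0) := by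
  refine tendsto_order.2 ⟨fun a ha => Eventually.of_forall fun n => ha.trans_le (by positivity),
    fun ε hε => ?_⟩
  by_contra hlarge
  have hfreq : ∃ᶠ n : ℕ in atTop, ε ≤ (crossings f n).ncard / n := by
    simpa only [not_eventually, not_lt] using hlarge
  obtain ⟨𝒰, h𝒰, A, hA, hfA⟩ := exists_le_ultraDensity_and_ultraDensity_image_le_zero hfreq
  have hle := h _ (isDensityMeasure_ultraDensity h𝒰) A
  linarith

/-- If every density measure is invariant under a permutation `π`, then `π`
belongs to the Lévy group. -/
theorem inLevyGroup_of_all_densityMeasures_invariant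
    (π : Equiv.Perm ℕ)
    (h : ∀ μ : Set ℕ → ℝ, IsDensityMeasure μ → ∀ A : Set ℕ, μ (π '' A) = μ A) :
    InLevyGroup π :=
  inLevyGroup_of_all_densityMeasures_invariant_general π fun μ hμ A => (h μ hμ A).ge
end

section
/- Permutations in the Lévy group preserve asymptotic density: if π ∈ 𝒢 and A ⊆ ℕ has asymptotic density d(A), then πA has asymptotic density and d(πA) = d(A). -/
open Filter Topology

/-!
Let `f` be injective and `S = [1, n]`. Then `f` matches the part of `A` in `f⁻¹ S` with the part of
`f '' A` in `S`, so it is enough to compare `S` with `f⁻¹ S`. As `f⁻¹ S` is no larger than `S`, both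
differences of the two sets are bounded by the size of `S \ f⁻¹ S`. A point of `S \ f⁻¹ S` is moved
beyond `n`, which happens to `o(n)` points by the Lévy condition, or is the one point sent to `0`.
-/

section SetCard

variable {α β : Type*}

theorem ncard_inter_le_ncard_inter_add_ncard_sdiff {S T : Set α} (hS : S.Finite) (hT : T.Finite)
    (A : Set α) : (S ∩ A).ncard ≤ (T ∩ A).ncard + (S \ T).ncard := by
  have hsub : (S ∩ A) \ (T ∩ A) ⊆ S \ T := fun _ hx ↦ ⟨hx.1.1, fun hxT ↦ hx.2 ⟨hxT, hx.1.2⟩⟩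
  calc (S ∩ A).ncard ≤ ((S ∩ A) \ (T ∩ A)).ncard + (T ∩ A).ncard :=
        Set.ncard_le_ncard_sdiff_add_ncard _ _ (hT.inter_of_left A)
    _ ≤ (T ∩ A).ncard + (S \ T).ncard := by
        rw [add_comm]
        gcongr
        exact hS.sdiff

theorem ncard_preimage_le_of_injective {f : α → β} (hf : f.Injective) {S : Set β}
    (hS : S.Finite) : (f ⁻¹' S).ncard ≤ S.ncard :=
  Set.ncard_le_ncard_of_injOn f (fun _ h ↦ h) hf.injOn hS

theorem ncard_preimage_sdiff_le_ncard_sdiff_preimage {f : α → α} (hf : f.Injective)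
    {S : Set α} (hS : S.Finite) :
    (f ⁻¹' S \ S).ncard ≤ (S \ f ⁻¹' S).ncard :=
  (Set.ncard_le_ncard_iff_ncard_sdiff_le_ncard_sdiff (hS.preimage hf.injOn) hS).1
    (ncard_preimage_le_of_injective hf hS)

theorem ncard_image_inter_eq_ncard_preimage_inter {f : α → β} (hf : f.Injective) (A : Set α)
    (S : Set β) : (f '' A ∩ S).ncard = (f ⁻¹' S ∩ A).ncard := by
  rw [← Set.image_inter_preimage, Set.ncard_image_of_injective _ hf, Set.inter_comm]

theorem abs_ncard_image_inter_sub_ncard_inter_le {f : α → α} (hf : f.Injective) {S : Set α}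
    (hS : S.Finite) (A : Set α) :
    |((f '' A ∩ S).ncard : ℝ) - (A ∩ S).ncard| ≤ (S \ f ⁻¹' S).ncard := by
  have hS' : (f ⁻¹' S).Finite := hS.preimage hf.injOn
  have himage_le := ncard_inter_le_ncard_inter_add_ncard_sdiff hS' hS A
  have hle_image := ncard_inter_le_ncard_inter_add_ncard_sdiff hS hS' A
  have hsdiff := ncard_preimage_sdiff_le_ncard_sdiff_preimage hf hS
  rw [ncard_image_inter_eq_ncard_preimage_inter hf, Set.inter_comm A, abs_sub_le_iff,
    sub_le_iff_le_add', sub_le_iff_le_add']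
  constructor
  · exact_mod_cast himage_le.trans (by gcongr)
  · exact_mod_cast hle_image

end SetCard

theorem ncard_Icc_sdiff_preimage_le {f : ℕ → ℕ} (hf : f.Injective) (n : ℕ) :
    (Set.Icc 1 n \ f ⁻¹' Set.Icc 1 n).ncard ≤ {k : ℕ | k ≤ n ∧ n < f k}.ncard + 1 := by
  have hsub : Set.Icc 1 n \ f ⁻¹' Set.Icc 1 n ⊆ {k | k ≤ n ∧ n < f k} ∪ f ⁻¹' {0} := by
    intro k
    simp only [Set.mem_sdiff, Set.mem_Icc, Set.mem_preimage, Set.mem_union, Set.mem_ofPred_eq,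
      Set.mem_singleton_iff]
    omega
  have hexceed : {k | k ≤ n ∧ n < f k}.Finite := (Set.finite_Iic n).subset fun _ h ↦ h.1
  have hzero : (f ⁻¹' {0}).Finite := (Set.finite_singleton 0).preimage hf.injOn
  calc (Set.Icc 1 n \ f ⁻¹' Set.Icc 1 n).ncard
      ≤ ({k | k ≤ n ∧ n < f k} ∪ f ⁻¹' {0}).ncard := Set.ncard_le_ncard hsub (hexceed.union hzero)
    _ ≤ {k | k ≤ n ∧ n < f k}.ncard + (f ⁻¹' {0}).ncard := Set.ncard_union_le _ _
    _ ≤ {k | k ≤ n ∧ n < f k}.ncard + 1 := by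
        grw [ncard_preimage_le_of_injective hf (Set.finite_singleton 0), Set.ncard_singleton]

theorem abs_count_image_sub_count_le {f : ℕ → ℕ} (hf : f.Injective) (A : Set ℕ) (n : ℕ) :
    |count (f '' A) n - count A n| ≤ {k : ℕ | k ≤ n ∧ n < f k}.ncard + 1 :=
  (abs_ncard_image_inter_sub_ncard_inter_le hf (Set.finite_Icc 1 n) A).trans
    (mod_cast ncard_Icc_sdiff_preimage_le hf n)

theorem levyGroup_preserves_density_general {f : ℕ → ℕ} (hf : f.Injective)
    (hlevy : Tendsto (fun n : ℕ ↦ ({k : ℕ | k ≤ n ∧ n < f k}.ncard : ℝ) / n) atTop (𝓝 0))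
    (A : Set ℕ) (a : ℝ) : HasDensity (f '' A) a ↔ HasDensity A a := by
  have hbound : Tendsto (fun n : ℕ ↦ ({k : ℕ | k ≤ n ∧ n < f k}.ncard : ℝ) / n + 1 / n)
      atTop (𝓝 0) := by
    simpa using hlevy.add (tendsto_one_div_atTop_nhds_zero_nat (𝕜 := ℝ))
  refine tendsto_iff_of_dist (squeeze_zero (fun _ ↦ dist_nonneg) (fun n ↦ ?_) hbound)
  rw [Real.dist_eq, ← sub_div, ← add_div, abs_div, Nat.abs_cast]
  gcongr
  exact abs_count_image_sub_count_le hf A n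

/-- Permutations in the Lévy group preserve asymptotic density. -/
theorem levyGroup_preserves_density (π : Equiv.Perm ℕ) (hπ : InLevyGroup π)
    (A : Set ℕ) (a : ℝ) (hA : HasDensity A a) :
    HasDensity (π '' A) a :=
  (levyGroup_preserves_density_general π.injective hπ A a).2 hA
end

section
/- Let ℱ be a free ultrafilter on the positive integers and let 2ℱ be the ultrafilter with base {2F : F ∈ ℱ}, where 2F = {2k : k ∈ F}. Then the function μ defined by μ(A) = 2·((2ℱ)-lim A(n)/n) − (ℱ-lim A(n)/n) is a density measure. -/
open Filter Topology

/-- Blümlinger's density measure `μ(X) = 2·((2ℱ)-lim X(n)/n) − (ℱ-lim X(n)/n)`. -/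
noncomputable def muEx (𝒰 𝒱 : Ultrafilter ℕ) (X : Set ℕ) : ℝ :=
  2 * ulim 𝒱 (fun n : ℕ => count X n / n) - ulim 𝒰 (fun n : ℕ => count X n / n)

/-!
`2 (A(2n) / 2n) - A(n) / n` is the proportion of `A` in `(n, 2n]`, so `muEx` is the setwise limit
along `𝒰` of the uniform distributions on `(n, 2n]`, and such a limit is again finitely additive.
If `A` has asymptotic density `a`, both limits defining `muEx` are `a`, and `2a - a = a`.
-/

open MeasureTheory ProbabilityTheory

theorem uniformOn_real_apply {Ω : Type*} [MeasurableSpace Ω] [MeasurableSingletonClass Ω]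
    {s : Set Ω} (hs : s.Finite) (A : Set Ω) :
    (uniformOn s).real A = ((A ∩ s).ncard : ℝ) / s.ncard := by
  have hAs : (A ∩ s).Finite := hs.inter_of_right A
  rw [measureReal_def, uniformOn, cond_apply hs.measurableSet, Set.inter_comm,
    Measure.count_apply_finite _ hs, Measure.count_apply_finite _ hAs,
    ← Set.ncard_eq_toFinset_card s hs, ← Set.ncard_eq_toFinset_card _ hAs, ENNReal.toReal_mul,
    ENNReal.toReal_inv, ENNReal.toReal_natCast, ENNReal.toReal_natCast, inv_mul_eq_div]

theorem isFAMeasure_measureReal (P : Measure ℕ) [IsProbabilityMeasure P] : IsFAMeasure P.real :=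
  ⟨fun _ => measureReal_nonneg, fun _ => measureReal_le_one, probReal_univ,
    fun _ _ hAB => measureReal_union hAB .of_discrete⟩

theorem isFAMeasure_uniformOn {s : Set ℕ} (hs : s.Finite) (hne : s.Nonempty) :
    IsFAMeasure (uniformOn s).real :=
  have := isProbabilityMeasure_uniformOn hs hne
  isFAMeasure_measureReal (uniformOn s)

theorem IsFAMeasure.of_tendsto {ι : Type*} {l : Filter ι} [l.NeBot] {ν : ι → Set ℕ → ℝ}
    {μ : Set ℕ → ℝ} (hν : ∀ᶠ i in l, IsFAMeasure (ν i))
    (hlim : ∀ A, Tendsto (fun i => ν i A) l (𝓝 (μ A))) : IsFAMeasure μ := by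
  refine ⟨fun A => ge_of_tendsto (hlim A) (hν.mono fun _ ⟨hnonneg, _⟩ => hnonneg A),
    fun A => le_of_tendsto (hlim A) (hν.mono fun _ ⟨_, hle, _⟩ => hle A), ?_, fun A B hAB => ?_⟩
  · exact tendsto_nhds_unique_of_eventuallyEq (hlim Set.univ) tendsto_const_nhds
      (hν.mono fun _ ⟨_, _, huniv, _⟩ => huniv)
  · exact tendsto_nhds_unique_of_eventuallyEq (hlim (A ∪ B)) ((hlim A).add (hlim B))
      (hν.mono fun _ ⟨_, _, _, hunion⟩ => hunion A B hAB)

theorem tendsto_ulim_of_isCompact (𝒰 : Ultrafilter ℕ) {K : Set ℝ} (hK : IsCompact K) {x : ℕ → ℝ}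
    (hx : ∀ᶠ n in 𝒰, x n ∈ K) : Tendsto x 𝒰 (𝓝 (ulim 𝒰 x)) := by
  obtain ⟨L, -, hL⟩ := hK.ultrafilter_le_nhds' (𝒰.map x) hx
  exact tendsto_nhds_limUnder ⟨L, hL⟩

theorem count_div_eq_uniformOn_real (A : Set ℕ) (n : ℕ) :
    count A n / n = (uniformOn (Set.Icc 1 n)).real A := by
  rw [uniformOn_real_apply (Set.finite_Icc 1 n), Set.ncard_Icc_nat, Nat.add_sub_cancel, count]

theorem tendsto_ulim_count_div (𝒰 : Ultrafilter ℕ) (A : Set ℕ) :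
    Tendsto (fun n : ℕ => count A n / n) 𝒰 (𝓝 (ulim 𝒰 fun n : ℕ => count A n / n)) := by
  refine tendsto_ulim_of_isCompact 𝒰 (isCompact_Icc (a := 0) (b := 1)) (.of_forall fun n => ?_)
  rw [count_div_eq_uniformOn_real]
  exact ⟨measureReal_nonneg, measureReal_le_one⟩

theorem count_sub_count_eq_ncard (A : Set ℕ) {m n : ℕ} (hmn : m ≤ n) :
    count A n - count A m = ((A ∩ Set.Ioc m n).ncard : ℝ) := by
  have hdisj : Disjoint (A ∩ Set.Icc 1 m) (A ∩ Set.Ioc m n) :=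
    Set.disjoint_left.2 fun k hk hk' => hk'.2.1.not_ge hk.2.2
  have hunion : A ∩ Set.Icc 1 n = A ∩ Set.Icc 1 m ∪ A ∩ Set.Ioc m n := by
    ext k
    simp only [Set.mem_inter_iff, Set.mem_union, Set.mem_Icc, Set.mem_Ioc]
    grind
  rw [count, count, hunion, Set.ncard_union_eq hdisj ((Set.finite_Icc 1 m).inter_of_right A)
    ((Set.finite_Ioc m n).inter_of_right A), Nat.cast_add, add_sub_cancel_left]

/-- At `n = 0` both sides vanish: `uniformOn ∅ = 0` and `x / 0 = 0`. -/
theorem uniformOn_Ioc_real_eq_two_mul_sub (A : Set ℕ) (n : ℕ) :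
    (uniformOn (Set.Ioc n (2 * n))).real A =
      2 * (count A (2 * n) / (2 * n : ℕ)) - count A n / n := by
  have hcard : (Set.Ioc n (2 * n)).ncard = n := by rw [Set.ncard_Ioc_nat]; omega
  rw [uniformOn_real_apply (Set.finite_Ioc _ _), hcard, ← count_sub_count_eq_ncard A (by omega),
    sub_div, Nat.cast_mul, Nat.cast_ofNat, mul_div_assoc', mul_div_mul_left _ _ two_ne_zero]

theorem tendsto_uniformOn_Ioc_real_muEx {𝒰 𝒱 : Ultrafilter ℕ}
    (hdouble : Tendsto (fun k : ℕ => 2 * k) 𝒰 𝒱) (A : Set ℕ) :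
    Tendsto (fun n : ℕ => (uniformOn (Set.Ioc n (2 * n))).real A) 𝒰 (𝓝 (muEx 𝒰 𝒱 A)) := by
  simp only [uniformOn_Ioc_real_eq_two_mul_sub]
  exact (((tendsto_ulim_count_div 𝒱 A).comp hdouble).const_mul 2).sub (tendsto_ulim_count_div 𝒰 A)

theorem HasDensity.ulim_eq {A : Set ℕ} {a : ℝ} (hA : HasDensity A a) {𝒰 : Ultrafilter ℕ}
    (h𝒰 : (𝒰 : Filter ℕ) ≤ atTop) : ulim 𝒰 (fun n : ℕ => count A n / n) = a :=
  (hA.mono_left h𝒰).limUnder_eq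

theorem HasDensity.muEx_eq {A : Set ℕ} {a : ℝ} (hA : HasDensity A a) {𝒰 𝒱 : Ultrafilter ℕ}
    (h𝒰 : (𝒰 : Filter ℕ) ≤ atTop) (h𝒱 : (𝒱 : Filter ℕ) ≤ atTop) : muEx 𝒰 𝒱 A = a := by
  rw [muEx, hA.ulim_eq h𝒰, hA.ulim_eq h𝒱]
  ring

/-- For a free ultrafilter `ℱ` and the ultrafilter `2ℱ` with base
`{2F : F ∈ ℱ}`, the map `A ↦ 2·((2ℱ)-lim A(n)/n) − (ℱ-lim A(n)/n)` is a
density measure. -/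
theorem muEx_isDensityMeasure (𝒰 𝒱 : Ultrafilter ℕ)
    (hfree : (𝒰 : Filter ℕ) ≤ Filter.cofinite)
    (h𝒱 : ∀ B : Set ℕ, B ∈ 𝒱 ↔ ∃ F ∈ 𝒰, (fun k : ℕ => 2 * k) '' F ⊆ B) :
    IsDensityMeasure (muEx 𝒰 𝒱) := by
  obtain rfl : 𝒱 = 𝒰.map (fun k : ℕ => 2 * k) :=
    Ultrafilter.ext fun B => (h𝒱 B).trans mem_map_iff_exists_image.symm
  have h𝒰_atTop : (𝒰 : Filter ℕ) ≤ atTop := hfree.trans_eq Nat.cofinite_eq_atTop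
  have h𝒱_atTop : Tendsto (fun k : ℕ => 2 * k) 𝒰 atTop :=
    (tendsto_id.const_mul_atTop' two_pos).mono_left h𝒰_atTop
  have hblocks : ∀ᶠ n : ℕ in 𝒰, IsFAMeasure (uniformOn (Set.Ioc n (2 * n))).real :=
    h𝒰_atTop <| (eventually_ne_atTop 0).mono fun n hn =>
      isFAMeasure_uniformOn (Set.finite_Ioc _ _) (Set.nonempty_Ioc.2 (by omega))
  exact ⟨.of_tendsto hblocks (tendsto_uniformOn_Ioc_real_muEx tendsto_map),
    fun A a hA => hA.muEx_eq h𝒰_atTop h𝒱_atTop⟩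
end
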